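/- arXiv:2605.19063 — 2 statements merged into one kernel-verified Lean document; each statement's English description precedes it below -/
import Mathlib

section
/- For every n ≥ 3 there is a bijection ψ : NC(n,3) → NC(n,3) such that for all π ∈ NC(n,3): skip(ψ(π)) = leap(π) and leap(ψ(π)) = skip(π); ψ preserves the multiset of block sizes of π; and if a < b ≤ c < d are the elements of the non-singleton blocks of π listed in increasing order (listing the middle element of a size-3 block twice, so that b = c in that case), then the elements of the non-singleton blocks of ψ(π), listed the same way, are d−c, b+d−a−c, d−a, d. -/
namespace QtN

/-! ### Lattice paths and parallelogram polyominoes -/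

/-- A step of a lattice path: east or north. -/
inductive Step : Type
  | E : Step
  | N : Step
  deriving DecidableEq, Repr

/-- Number of east steps of a path. -/
def countE (w : List Step) : ℕ := w.count Step.E

/-- Number of north steps of a path. -/
def countN (w : List Step) : ℕ := w.count Step.N

/-- Endpoint of a path started at the origin. -/
def pathPos (w : List Step) : ℕ × ℕ := (countE w, countN w)

/-- The set of lattice points visited by a path started at the origin. -/
def pathPts (w : List Step) : Finset (ℕ × ℕ) :=
  ((List.range (w.length + 1)).map (fun i => pathPos (w.take i))).toFinset

/-- `colHeightsAux w h`: for each east step of `w` (in order), the number of north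
steps preceding it, starting with `h` north steps already performed. -/
def colHeightsAux : List Step → ℕ → List ℕ
  | [], _ => []
  | Step.E :: r, h => h :: colHeightsAux r h
  | Step.N :: r, h => colHeightsAux r (h + 1)

/-- Height at which the path `w` crosses the vertical strip `i ≤ x ≤ i + 1`. -/
def colHeight (w : List Step) (i : ℕ) : ℕ := (colHeightsAux w 0).getD i 0

/-- A parallelogram polyomino of size `m × n`: a pair of monotone lattice paths from
`(0,0)` to `(m,n)` (east/north steps), the upper path staying weakly above the lower
path, and the two paths meeting only at `(0,0)` and `(m,n)`. -/
structure Polyomino (m n : ℕ) : Type where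
  lower : List Step
  upper : List Step
  lowerE : countE lower = m
  lowerN : countN lower = n
  upperE : countE upper = m
  upperN : countN upper = n
  above : ∀ i < m, colHeight lower i ≤ colHeight upper i
  meet : pathPts upper ∩ pathPts lower = {(0, 0), (m, n)}

/-- The area statistic: number of unit squares between the two paths,
minus `(m + n - 1)`. -/
def area {m n : ℕ} (P : Polyomino m n) : ℕ :=
  (∑ i ∈ Finset.range m, (colHeight P.upper i - colHeight P.lower i)) - (m + n - 1)

/-- Where an eastward run at height `y`, starting at `x`, first hits the lower path. -/
def eastTarget (hL : ℕ → ℕ) (m x y : ℕ) : ℕ :=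
  ((List.range m).filter (fun i => decide (x ≤ i ∧ y ≤ hL i))).headD m

/-- Total bounce contribution: from state `(x, y)` just after the `j`-th east-to-north
turn (counting the turns made so far), alternately go north until hitting the upper
path and east until hitting the lower path, each step contributing the number of
east-to-north turns preceding it. -/
def bounceAux (hU hL : ℕ → ℕ) (m n : ℕ) : ℕ → ℕ → ℕ → ℕ → ℕ
  | 0, _, _, _ => 0
  | fuel + 1, x, y, j =>
    if x = m ∧ y = n then 0
    else
      let y' := hU (x - 1)
      let x' := if y' = n then m else eastTarget hL m x y'
      (j + 1) * ((y' - y) + (x' - x)) + bounceAux hU hL m n fuel x' y' (j + 1)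

/-- The bounce statistic of a parallelogram polyomino: the bounce path starts with a
single east step (contributing `0`) and then alternates north runs (to the ceiling)
and east runs (to the floor); each step contributes the number of east-to-north turns
preceding it; finally `(m + n - 1)` is subtracted. -/
def bounce {m n : ℕ} (P : Polyomino m n) : ℕ :=
  bounceAux (colHeight P.upper) (colHeight P.lower) m n (m + n + 2) 1 0 0 - (m + n - 1)

/-! ### Set partitions and noncrossing partitions -/

/-- Maximum of a finite set of naturals (`0` for the empty set). -/
def fmax (β : Finset ℕ) : ℕ := β.sup id

/-- Minimum of a finite set of naturals (`0` for the empty set). -/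
def fmin (β : Finset ℕ) : ℕ := if h : β.Nonempty then β.min' h else 0

/-- A set partition of `{1, …, n}`, given by its finite set of blocks. -/
structure SetPartition (n : ℕ) : Type where
  blocks : Finset (Finset ℕ)
  not_empty_mem : ∅ ∉ blocks
  cover : ∀ i : ℕ, i ∈ Finset.Icc 1 n ↔ ∃ β ∈ blocks, i ∈ β
  disjoint : ∀ β ∈ blocks, ∀ γ ∈ blocks, β ≠ γ → Disjoint β γ

/-- A family of blocks is noncrossing if there are no `a < b < c < d` with
`a, c` in one block and `b, d` in a different block. -/
def IsNoncrossing (bs : Finset (Finset ℕ)) : Prop :=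
  ∀ a b c d : ℕ, a < b → b < c → c < d →
    ∀ β ∈ bs, ∀ γ ∈ bs, a ∈ β → c ∈ β → b ∈ γ → d ∈ γ → β = γ

/-- `NC n k`: noncrossing partitions of `{1, …, n}` with exactly `n - k + 1` blocks. -/
abbrev NC (n k : ℕ) : Type :=
  {P : SetPartition n // IsNoncrossing P.blocks ∧ P.blocks.card = n - k + 1}

/-- The skip statistic: `∑_{β} (max β - min β - |β| + 1)`. -/
def skip (bs : Finset (Finset ℕ)) : ℕ :=
  ∑ β ∈ bs, ((fmax β + 1 - fmin β) - β.card)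

/-- The non-singleton blocks of a partition. -/
def nsBlocks (bs : Finset (Finset ℕ)) : Finset (Finset ℕ) :=
  bs.filter (fun β => 2 ≤ β.card)

/-- The block of `bs` containing `x` (junk if there is not exactly one). -/
def blockContaining (bs : Finset (Finset ℕ)) (x : ℕ) : Finset ℕ :=
  (bs.filter (fun β => x ∈ β)).sup id

/-- For a noncrossing partition in `NC n 3`, the quadruple `(a, b, c, d)` describing its
non-singleton blocks: for two pair blocks `{a,b}` and `{c,d}` (with `a` the global
minimum) this is `(a, b, c, d)`; for a single triple block `{a, b, c}` (`a < b < c`)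
this is `(a, b, b, c)`. -/
def blockQuad (bs : Finset (Finset ℕ)) : ℕ × ℕ × ℕ × ℕ :=
  let A := blockContaining (nsBlocks bs) (fmin ((nsBlocks bs).sup id))
  if (nsBlocks bs).card = 1 then
    let l := A.sort (· ≤ ·)
    (l.getD 0 0, l.getD 1 0, l.getD 1 0, l.getD 2 0)
  else
    let B := ((nsBlocks bs).erase A).sup id
    (fmin A, fmax A, fmin B, fmax B)

/-- The leap statistic on `NC n 3`: `leap(ab|cd) = c - 2 + max(0, c - b)`,
and `leap({a,b,c}) = b - 2` (the case `b = c`). -/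
def leap (bs : Finset (Finset ℕ)) : ℕ :=
  let (_, b, c, _) := blockQuad bs
  (c - 2) + (c - b)

/-- The skew statistic on `NC n 3`: `skew(ab|cd) = c - 2 + a` if `b < c`, else `c - 2`;
`skew({a,b,c}) = b - 2` (the case `b = c`). -/
def skew (bs : Finset (Finset ℕ)) : ℕ :=
  let (a, b, c, _) := blockQuad bs
  if b < c then c - 2 + a else c - 2

/-- The mag statistic on `NC n 3`: `mag(ab|cd) = a + max(b, c) - 2 - ⌈(b - a)/2⌉`,
and `mag({a,b,c}) = a + b - 2 - ⌈(b - a)/2⌉` (the case `b = c`). -/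
def mag (bs : Finset (Finset ℕ)) : ℕ :=
  let (a, b, c, _) := blockQuad bs
  a + max b c - 2 - (b - a + 1) / 2

/-- The area statistic on noncrossing partitions:
`area(π) = ∑_{β, β' ∈ π} #{ i ∈ β' : i < max β < max β' }` (ordered pairs of blocks). -/
def ncArea (bs : Finset (Finset ℕ)) : ℕ :=
  ∑ β ∈ bs, ∑ γ ∈ bs, (γ.filter (fun i => i < fmax β ∧ fmax β < fmax γ)).card

/-- The elements of the non-singleton blocks, listed in increasing order, with
the middle element of a size-3 block listed twice. -/
def nsList (bs : Finset (Finset ℕ)) : List ℕ :=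
  let l := ((nsBlocks bs).sup id).sort (· ≤ ·)
  if l.length = 3 then [l.getD 0 0, l.getD 1 0, l.getD 1 0, l.getD 2 0] else l

/-- The multiset of block sizes of a partition. -/
def blockSizes (bs : Finset (Finset ℕ)) : Multiset ℕ := bs.val.map Finset.card

/-- The image of a partition of `{1, …, n}` under the flip `i ↦ n + 1 - i`. -/
def flipBlocks (n : ℕ) (bs : Finset (Finset ℕ)) : Finset (Finset ℕ) :=
  bs.image (fun β => β.image (fun i => n + 1 - i))

/-! ### The mingarc statistic -/

/-- The gaps `ν_r = m_{r+1} - m_r - 1` between consecutive block minima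
`m_1 < ⋯ < m_h` (with `m_{h+1} = n + 1`). -/
def nuList (n : ℕ) (bs : Finset (Finset ℕ)) : List ℕ :=
  let ms := ((bs.image fmin).sort (· ≤ ·)) ++ [n + 1]
  (List.range (bs.image fmin).card).map (fun r => ms.getD (r + 1) 0 - ms.getD r 0 - 1)

/-- Concatenation of `replicate ν c` over a list of pairs `(c, ν)`. -/
def repeatEach : List (ℕ × ℕ) → List ℕ
  | [] => []
  | p :: r => List.replicate p.2 p.1 ++ repeatEach r

/-- The right endpoints `y_1 ≤ ⋯ ≤ y_{k-1}`: each block maximum `c_r` repeated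
`ν_r` times, in increasing order. -/
def ysList (n : ℕ) (bs : Finset (Finset ℕ)) : List ℕ :=
  repeatEach (List.zip ((bs.image fmax).sort (· ≤ ·)) (nuList n bs))

/-- The left endpoints `x_1 < ⋯ < x_{k-1}`: the elements of `{1, …, n}` that are not
block maxima, in increasing order. -/
def xsList (n : ℕ) (bs : Finset (Finset ℕ)) : List ℕ :=
  ((Finset.Icc 1 n).filter (fun i => i ∉ bs.image fmax)).sort (· ≤ ·)

/-- Greedy left-to-right selection of arcs: keep the first arc, and thereafter keep the
earliest arc whose left endpoint exceeds the right endpoint of the last kept arc. -/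
def greedyArcs : List (ℕ × ℕ) → Option ℕ → List (ℕ × ℕ)
  | [], _ => []
  | a :: rest, none => a :: greedyArcs rest (some a.2)
  | a :: rest, some r =>
      if r < a.1 then a :: greedyArcs rest (some a.2) else greedyArcs rest (some r)

/-- The mingarc statistic: the sum of `n - y_i` over the greedily selected
candidate arcs `[x_i, y_i]`. -/
def mingarc (n : ℕ) (bs : Finset (Finset ℕ)) : ℕ :=
  ((greedyArcs (List.zip (xsList n bs) (ysList n bs)) none).map (fun p => n - p.2)).sum

/-! ### The map η from polyominoes to noncrossing partitions -/

/-- Largest column index `i < m` with `colHeight lower i ≤ j`: the rightmost cell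
adjacent to the floor in row `j`. -/
def eFloor {m k : ℕ} (P : Polyomino m k) (j : ℕ) : ℕ :=
  (((List.range m).filter (fun i => decide (colHeight P.lower i ≤ j))).getLastD 0)

/-- Smallest column index `i` with `colHeight upper i ≥ j + 1`: the leftmost cell
adjacent to the ceiling in row `j` (with default `m - 1`). -/
def fCeil {m k : ℕ} (P : Polyomino m k) (j : ℕ) : ℕ :=
  (((List.range m).filter (fun i => decide (j + 1 ≤ colHeight P.upper i))).headD (m - 1))

/-- The number of cells adjacent to the ceiling in row `j`. -/
def rowCount {m k : ℕ} (P : Polyomino m k) (j : ℕ) : ℕ :=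
  fCeil P (j + 1) - fCeil P j + 1

/-- Pick, `cnt` times, the largest label in `{1, …, L}` not used yet. -/
def pickRow : ℕ → ℕ → Finset ℕ → Finset ℕ
  | 0, _, _ => ∅
  | cnt + 1, L, used =>
      let x := fmax ((Finset.Icc 1 L) \ used)
      insert x (pickRow cnt L (insert x used))

/-- The blocks of `η(P)`: label the cells adjacent to the floor `1, …, n` going bottom
to top, left to right (the label of the floor cell in column `i`, row `j` is
`i + j + 1`, and the labels present in rows `≤ j` are exactly `1, …, eFloor P j + j + 1`);
then going bottom to top, left to right over the cells adjacent to the ceiling, assign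
to each the largest unused indexing label occurring in the same row or below; the
blocks are the label sets of the ceiling rows. -/
def etaBlocks {m k : ℕ} (P : Polyomino m k) : Finset (Finset ℕ) :=
  (((List.range k).foldl
      (fun st j =>
        let B := pickRow (rowCount P j) (eFloor P j + j + 1) st.1
        (st.1 ∪ B, B :: st.2))
      ((∅ : Finset ℕ), ([] : List (Finset ℕ)))).2).toFinset


/-- The non-singleton blocks determined by a quadruple and a flag. -/
def nsQ (t : Bool) (a b c d : ℕ) : Finset (Finset ℕ) :=
  if b = c then {{a, b, d}} else if t then {{a, b}, {c, d}} else {{a, d}, {b, c}}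

/-- `bs` has the non-singleton blocks described by the parameters. -/
def IsQ (n : ℕ) (bs : Finset (Finset ℕ)) (t : Bool) (a b c d : ℕ) : Prop :=
  1 ≤ a ∧ a < b ∧ b ≤ c ∧ c < d ∧ d ≤ n ∧ nsBlocks bs = nsQ t a b c d

theorem sort_card_three (s : Finset ℕ) (h : s.card = 3) :
    ∃ a b c, a < b ∧ b < c ∧ s = {a, b, c} := by
  have hl : (s.sort (· ≤ ·)).length = 3 := by simp [h]
  have hs : (s.sort (· ≤ ·)).Pairwise (· < ·) := (Finset.sortedLT_sort s).pairwise
  have hf : (s.sort (· ≤ ·)).toFinset = s := Finset.sort_toFinset s _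
  match hm : s.sort (· ≤ ·), hl with
  | [a, b, c], _ =>
    rw [hm] at hs hf
    simp at hs hf
    exact ⟨a, b, c, by omega, by omega, hf.symm⟩

theorem sort_card_two (s : Finset ℕ) (h : s.card = 2) :
    ∃ a b, a < b ∧ s = {a, b} := by
  obtain ⟨x, y, hne, rfl⟩ := Finset.card_eq_two.1 h
  rcases lt_or_gt_of_ne hne with h | h
  · exact ⟨x, y, h, rfl⟩
  · exact ⟨y, x, h, Finset.pair_comm x y⟩

theorem sort_eq_of {s : Finset ℕ} {l : List ℕ} (h1 : l.Pairwise (· < ·)) (h2 : l.toFinset = s) :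
    s.sort (· ≤ ·) = l := by
  subst h2
  have hl : l.SortedLT := h1.sortedLT
  exact (List.toFinset_sort (· ≤ ·) (hl.nodup)).2 (h1.imp (fun h => le_of_lt h))

theorem fmin_eq {s : Finset ℕ} {a : ℕ} (h : a ∈ s) (h2 : ∀ x ∈ s, a ≤ x) : fmin s = a := by
  have hne : s.Nonempty := ⟨a, h⟩
  rw [fmin, dif_pos hne]
  exact le_antisymm (Finset.min'_le _ _ h) (Finset.le_min' _ _ _ h2)

theorem fmax_eq {s : Finset ℕ} {a : ℕ} (h : a ∈ s) (h2 : ∀ x ∈ s, x ≤ a) : fmax s = a := by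
  rw [fmax]
  exact le_antisymm (Finset.sup_le h2) (Finset.le_sup (f := id) h)

theorem block_pos {n : ℕ} (P : SetPartition n) {β : Finset ℕ} (h : β ∈ P.blocks) : 1 ≤ β.card := by
  rw [Nat.one_le_iff_ne_zero, Finset.card_ne_zero, Finset.nonempty_iff_ne_empty]
  rintro rfl
  exact P.not_empty_mem h

theorem block_sub {n : ℕ} (P : SetPartition n) {β : Finset ℕ} (h : β ∈ P.blocks) {x : ℕ}
    (hx : x ∈ β) : 1 ≤ x ∧ x ≤ n :=
  Finset.mem_Icc.1 ((P.cover x).2 ⟨β, h, hx⟩)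

theorem sum_card_blocks {n : ℕ} (P : SetPartition n) : ∑ β ∈ P.blocks, β.card = n := by
  have h : P.blocks.biUnion id = Finset.Icc 1 n := by
    ext i
    rw [P.cover i]; simp
  have := Finset.card_biUnion (s := P.blocks) (t := id) (fun x hx y hy hxy => P.disjoint x hx y hy hxy)
  rw [h] at this
  simpa using this.symm

theorem sum_ns {n : ℕ} (hn : 3 ≤ n) (π : NC n 3) :
    ∑ β ∈ nsBlocks π.val.blocks, (β.card - 1) = 2 := by
  have h1 := sum_card_blocks π.val
  have h2 := π.2.2
  have h3 : ∑ β ∈ π.val.blocks, (β.card - 1) + ∑ β ∈ π.val.blocks, 1 = n := by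
    rw [← Finset.sum_add_distrib]
    refine Eq.trans (Finset.sum_congr rfl (fun β hβ => ?_)) h1
    have := block_pos π.val hβ
    omega
  have h4 : ∑ β ∈ nsBlocks π.val.blocks, (β.card - 1) = ∑ β ∈ π.val.blocks, (β.card - 1) := by
    refine Finset.sum_subset (Finset.filter_subset _ _) (fun β hβ hβ2 => ?_)
    simp [nsBlocks, hβ] at hβ2
    omega
  simp at h3
  omega

theorem exists_isQ {n : ℕ} (hn : 3 ≤ n) (π : NC n 3) :
    ∃ t a b c d, IsQ n π.val.blocks t a b c d := by
  have hs := sum_ns hn π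
  have hsub : ∀ β ∈ nsBlocks π.val.blocks, β ∈ π.val.blocks ∧ 2 ≤ β.card := by
    intro β hβ; simpa [nsBlocks] using hβ
  have hle : (nsBlocks π.val.blocks).card ≤ 2 := by
    rw [← hs, Finset.card_eq_sum_ones]
    refine Finset.sum_le_sum (fun β hβ => ?_)
    have := (hsub β hβ).2
    omega
  have h0 : (nsBlocks π.val.blocks).card ≠ 0 := by
    intro h
    rw [Finset.card_eq_zero] at h
    simp [h] at hs
  have h12 : (nsBlocks π.val.blocks).card = 1 ∨ (nsBlocks π.val.blocks).card = 2 := by omega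
  rcases h12 with h | h
  · obtain ⟨β, hβ⟩ := Finset.card_eq_one.1 h
    rw [hβ] at hs hsub
    simp at hs hsub
    obtain ⟨a, b, c, hab, hbc, rfl⟩ := sort_card_three β (by omega)
    have ha := block_sub π.val hsub.1 (x := a) (by simp)
    have hc := block_sub π.val hsub.1 (x := c) (by simp)
    exact ⟨true, a, b, b, c, ha.1, hab, le_rfl, hbc, hc.2, by simp [hβ, nsQ]⟩
  · obtain ⟨β, γ, hne, hβ⟩ := Finset.card_eq_two.1 h
    rw [hβ] at hs hsub
    rw [Finset.sum_pair hne] at hs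
    have hb := hsub β (by simp)
    have hg := hsub γ (by simp)
    clear h h0 hle hsub
    have key : ∀ β γ : Finset ℕ, β ≠ γ → nsBlocks π.val.blocks = {β, γ} → β ∈ π.val.blocks →
        γ ∈ π.val.blocks → ∀ a b c d : ℕ, a < b → c < d → a < c → β = {a, b} → γ = {c, d} →
        ∃ t a b c d, IsQ n π.val.blocks t a b c d := by
      intro β γ hne hβ hb hg a b c d hab hcd hac h1 h2
      have hdis := π.val.disjoint _ hb _ hg hne
      have hnc := π.2.1 a c b d
      subst h1 h2
      simp at hdis
      have ha := block_sub π.val hb (x := a) (by simp)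
      have hb' := block_sub π.val hb (x := b) (by simp)
      have hd := block_sub π.val hg (x := d) (by simp)
      rcases lt_or_gt_of_ne (show b ≠ c by grind) with h | h
      · exact ⟨true, a, b, c, d, ha.1, hab, h.le, hcd, hd.2, by simp [hβ, nsQ, h.ne]⟩
      · have hdb : d < b := by
          by_contra hcon
          exact hne (hnc hac h (by grind) _ hb _ hg (by simp) (by simp) (by simp) (by simp))
        exact ⟨false, a, c, d, b, ha.1, hac, hcd.le, hdb, hb'.2, by simp [hβ, nsQ, hcd.ne]⟩
    obtain ⟨a, b, hab, h1⟩ := sort_card_two β (by omega)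
    obtain ⟨c, d, hcd, h2⟩ := sort_card_two γ (by omega)
    have hdis := π.val.disjoint _ hb.1 _ hg.1 hne
    rcases lt_or_gt_of_ne (show a ≠ c by
      rintro rfl
      exact (Finset.disjoint_left.1 hdis) (show a ∈ β by simp [h1]) (by simp [h2])) with h | h
    · exact key β γ hne hβ hb.1 hg.1 a b c d hab hcd h h1 h2
    · exact key γ β hne.symm (by rw [hβ, Finset.pair_comm]) hg.1 hb.1 c d a b hcd hab h h2 h1

theorem exists_of_ns {n : ℕ} (hn : 3 ≤ n) (N : Finset (Finset ℕ)) (h2 : ∀ β ∈ N, 2 ≤ β.card)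
    (hd : ∀ β ∈ N, ∀ γ ∈ N, β ≠ γ → Disjoint β γ) (hI : ∀ β ∈ N, ∀ x ∈ β, 1 ≤ x ∧ x ≤ n)
    (hnc : IsNoncrossing N) (hs : ∑ β ∈ N, β.card = N.card + 2) :
    ∃ π : NC n 3, nsBlocks π.val.blocks = N := by
  classical
  set S := (Finset.Icc 1 n \ N.biUnion id).image (fun x => ({x} : Finset ℕ)) with hS
  have memS : ∀ β, β ∈ S ↔ ∃ x, 1 ≤ x ∧ x ≤ n ∧ (∀ γ ∈ N, x ∉ γ) ∧ β = {x} := by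
    intro β
    simp only [hS, Finset.mem_image, Finset.mem_sdiff, Finset.mem_Icc, Finset.mem_biUnion, id]
    constructor
    · rintro ⟨x, ⟨⟨h1, h2⟩, h3⟩, rfl⟩
      exact ⟨x, h1, h2, fun γ hγ hx => h3 ⟨γ, hγ, hx⟩, rfl⟩
    · rintro ⟨x, h1, h2, h3, rfl⟩
      exact ⟨x, ⟨⟨h1, h2⟩, fun ⟨γ, hγ, hx⟩ => h3 γ hγ hx⟩, rfl⟩
  have hcardU : (N.biUnion id).card = N.card + 2 := by
    rw [Finset.card_biUnion (t := id) (fun x hx y hy hxy => hd x hx y hy hxy)]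
    simpa using hs
  have hsubU : N.biUnion id ⊆ Finset.Icc 1 n := by
    intro x hx
    simp at hx
    obtain ⟨β, hβ, hx⟩ := hx
    exact Finset.mem_Icc.2 (hI β hβ x hx)
  have hcardle := Finset.card_le_card hsubU
  have hcardS : S.card = n - (N.card + 2) := by
    rw [hS, Finset.card_image_of_injective _ Finset.singleton_injective,
      Finset.card_sdiff_of_subset hsubU, hcardU]
    simp
  have hdisNS : Disjoint N S := by
    rw [Finset.disjoint_left]
    intro β hβ hβ2
    obtain ⟨x, -, -, -, rfl⟩ := (memS β).1 hβ2
    simpa using h2 _ hβ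
  refine ⟨⟨⟨N ∪ S, ?_, ?_, ?_⟩, ?_, ?_⟩, ?_⟩
  · intro h
    rcases Finset.mem_union.1 h with h | h
    · simpa using h2 _ h
    · obtain ⟨x, -, -, -, h⟩ := (memS _).1 h
      exact (Finset.singleton_ne_empty x) h.symm
  · intro i
    constructor
    · intro hi
      by_cases h : ∃ γ ∈ N, i ∈ γ
      · obtain ⟨γ, hγ, hi⟩ := h
        exact ⟨γ, Finset.mem_union_left _ hγ, hi⟩
      · push Not at h
        exact ⟨{i}, Finset.mem_union_right _ ((memS _).2
          ⟨i, (Finset.mem_Icc.1 hi).1, (Finset.mem_Icc.1 hi).2, h, rfl⟩), by simp⟩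
    · rintro ⟨β, hβ, hi⟩
      rcases Finset.mem_union.1 hβ with h | h
      · exact Finset.mem_Icc.2 (hI _ h _ hi)
      · obtain ⟨x, h1, h2, -, rfl⟩ := (memS _).1 h
        simp at hi
        subst hi
        exact Finset.mem_Icc.2 ⟨h1, h2⟩
  · intro β hβ γ hγ hne
    rcases Finset.mem_union.1 hβ with h | h <;> rcases Finset.mem_union.1 hγ with h' | h'
    · exact hd _ h _ h' hne
    · obtain ⟨x, -, -, h3, rfl⟩ := (memS _).1 h'
      simpa using h3 _ h
    · obtain ⟨x, -, -, h3, rfl⟩ := (memS _).1 h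
      simpa using h3 _ h'
    · obtain ⟨x, -, -, -, rfl⟩ := (memS _).1 h
      obtain ⟨y, -, -, -, rfl⟩ := (memS _).1 h'
      simpa using hne
  · intro a b c d hab hbc hcd β hβ γ hγ ha hc hb hd
    have hβN : β ∈ N := by
      rcases Finset.mem_union.1 hβ with h | h
      · exact h
      · obtain ⟨x, -, -, -, rfl⟩ := (memS _).1 h
        simp at ha hc
        omega
    have hγN : γ ∈ N := by
      rcases Finset.mem_union.1 hγ with h | h
      · exact h
      · obtain ⟨x, -, -, -, rfl⟩ := (memS _).1 h
        simp at hb hd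
        omega
    exact hnc a b c d hab hbc hcd β hβN γ hγN ha hc hb hd
  · show (N ∪ S).card = n - 3 + 1
    rw [Finset.card_union_of_disjoint hdisNS, hcardS]
    rw [hcardU] at hcardle
    simp at hcardle
    have : N.card ≠ 0 := by
      intro h
      rw [Finset.card_eq_zero] at h
      simp [h] at hs
    omega
  · show nsBlocks (N ∪ S) = N
    ext β
    simp only [nsBlocks, Finset.mem_filter, Finset.mem_union]
    constructor
    · rintro ⟨h | h, hc⟩
      · exact h
      · obtain ⟨x, -, -, -, rfl⟩ := (memS _).1 h
        simp at hc
    · intro h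
      exact ⟨Or.inl h, h2 _ h⟩

theorem exists_of_params {n : ℕ} (hn : 3 ≤ n) (t : Bool) (a b c d : ℕ) (h1 : 1 ≤ a) (hab : a < b)
    (hbc : b ≤ c) (hcd : c < d) (hd : d ≤ n) : ∃ π : NC n 3, IsQ n π.val.blocks t a b c d := by
  have : ∃ π : NC n 3, nsBlocks π.val.blocks = nsQ t a b c d := by
    unfold nsQ
    split_ifs with h ht
    · subst h
      have hc3 : ({a, b, d} : Finset ℕ).card = 3 :=
        Finset.card_eq_three.2 ⟨a, b, d, by omega, by omega, by omega, rfl⟩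
      apply exists_of_ns hn
      · simp [hc3]
      · simp
      · simp; omega
      · intro _ _ _ _ _ _ _ β hβ γ hγ _ _ _ _
        simp at hβ hγ
        rw [hβ, hγ]
      · simp [hc3]
    · have hne : ({a, b} : Finset ℕ) ≠ {c, d} := by
        intro h'
        have : a ∈ ({c, d} : Finset ℕ) := h' ▸ (by simp)
        simp at this; omega
      have hc1 : ({a, b} : Finset ℕ).card = 2 := Finset.card_pair (by omega)
      have hc2 : ({c, d} : Finset ℕ).card = 2 := Finset.card_pair (by omega)
      apply exists_of_ns hn
      · simp [hc1, hc2]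
      · simp; grind
      · simp; omega
      · intro x y z w _ _ _ β hβ γ hγ _ _ _ _
        simp at hβ hγ
        rcases hβ with rfl | rfl <;> rcases hγ with rfl | rfl <;> simp_all <;> omega
      · rw [Finset.sum_pair hne, Finset.card_pair hne, hc1, hc2]
    · have hne : ({a, d} : Finset ℕ) ≠ {b, c} := by
        intro h'
        have : a ∈ ({b, c} : Finset ℕ) := h' ▸ (by simp)
        simp at this; omega
      have hc1 : ({a, d} : Finset ℕ).card = 2 := Finset.card_pair (by omega)
      have hc2 : ({b, c} : Finset ℕ).card = 2 := Finset.card_pair (by omega)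
      apply exists_of_ns hn
      · simp [hc1, hc2]
      · simp; grind
      · simp; omega
      · intro x y z w _ _ _ β hβ γ hγ _ _ _ _
        simp at hβ hγ
        rcases hβ with rfl | rfl <;> rcases hγ with rfl | rfl <;> simp_all <;> omega
      · rw [Finset.sum_pair hne, Finset.card_pair hne, hc1, hc2]
  obtain ⟨π, hπ⟩ := this
  exact ⟨π, h1, hab, hbc, hcd, hd, hπ⟩

theorem nc_ext {n : ℕ} (π ρ : NC n 3) (h : nsBlocks π.val.blocks = nsBlocks ρ.val.blocks) :
    π = ρ := by
  have key : ∀ π ρ : NC n 3, nsBlocks π.val.blocks = nsBlocks ρ.val.blocks →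
      π.val.blocks ⊆ ρ.val.blocks := by
    intro π ρ h β hβ
    by_cases h2 : 2 ≤ β.card
    · have : β ∈ nsBlocks π.val.blocks := by simp [nsBlocks, hβ, h2]
      rw [h] at this
      exact (Finset.mem_filter.1 this).1
    · have h1 := block_pos π.val hβ
      obtain ⟨x, rfl⟩ := Finset.card_eq_one.1 (show β.card = 1 by omega)
      obtain ⟨γ, hγ, hx⟩ := (ρ.val.cover x).1 ((π.val.cover x).2 ⟨_, hβ, by simp⟩)
      by_cases h3 : 2 ≤ γ.card
      · have : γ ∈ nsBlocks ρ.val.blocks := by simp [nsBlocks, hγ, h3]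
        rw [← h] at this
        have hγ' := (Finset.mem_filter.1 this).1
        by_contra hcon
        have hne : ({x} : Finset ℕ) ≠ γ := by rintro rfl; exact hcon hγ
        have := π.val.disjoint _ hβ _ hγ' hne
        simp [hx] at this
      · have h1 := block_pos ρ.val hγ
        obtain ⟨y, rfl⟩ := Finset.card_eq_one.1 (show γ.card = 1 by omega)
        simp at hx
        subst hx
        exact hγ
  have hb : π.val.blocks = ρ.val.blocks := (key π ρ h).antisymm (key ρ π h.symm)
  obtain ⟨⟨_, _, _, _⟩, _⟩ := π
  obtain ⟨⟨_, _, _, _⟩, _⟩ := ρ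
  simp at hb
  subst hb
  rfl

theorem isQ_nsList {n : ℕ} {bs : Finset (Finset ℕ)} {t : Bool} {a b c d : ℕ}
    (h : IsQ n bs t a b c d) : nsList bs = [a, b, c, d] := by
  obtain ⟨h1, hab, hbc, hcd, hd, hns⟩ := h
  unfold nsList
  by_cases h : b = c
  · subst h
    have : ((nsBlocks bs).sup id).sort (· ≤ ·) = [a, b, d] := by
      apply sort_eq_of
      · simp; omega
      · rw [hns]; simp [nsQ]
    simp [this]
  · have : ((nsBlocks bs).sup id).sort (· ≤ ·) = [a, b, c, d] := by
      apply sort_eq_of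
      · simp; omega
      · rw [hns]
        simp only [nsQ, if_neg h]
        split_ifs <;> ext x <;> simp <;> tauto
    simp [this]

theorem isQ_skip {n : ℕ} (π : NC n 3) {t : Bool} {a b c d : ℕ}
    (h : IsQ n π.val.blocks t a b c d) : skip π.val.blocks =
      if b = c then d - a - 2 else if t then (b - a - 1) + (d - c - 1)
        else (d - a - 1) + (c - b - 1) := by
  obtain ⟨h1, hab, hbc, hcd, hd, hns⟩ := h
  have h4 : ∑ β ∈ nsBlocks π.val.blocks, ((fmax β + 1 - fmin β) - β.card) =
      skip π.val.blocks := by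
    refine Finset.sum_subset (Finset.filter_subset _ _) (fun β hβ hβ2 => ?_)
    simp [nsBlocks, hβ] at hβ2
    have h1 := block_pos π.val hβ
    obtain ⟨x, rfl⟩ := Finset.card_eq_one.1 (show β.card = 1 by omega)
    rw [fmax_eq (a := x) (by simp) (by simp), fmin_eq (a := x) (by simp) (by simp)]
    simp
  have pair : ∀ x y : ℕ, x < y → (fmax {x, y} + 1 - fmin {x, y}) - ({x, y} : Finset ℕ).card =
      y - x - 1 := by
    intro x y hxy
    rw [fmax_eq (a := y) (by simp) (by simp; omega), fmin_eq (a := x) (by simp) (by simp; omega),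
      Finset.card_pair hxy.ne]
    omega
  rw [← h4, hns]
  unfold nsQ
  split_ifs with h ht
  · have hc3 : ({a, b, d} : Finset ℕ).card = 3 :=
      Finset.card_eq_three.2 ⟨a, b, d, by omega, by omega, by omega, rfl⟩
    rw [Finset.sum_singleton, hc3, fmax_eq (a := d) (by simp) (by simp; omega),
      fmin_eq (a := a) (by simp) (by simp; omega)]
    omega
  · have hne : ({a, b} : Finset ℕ) ≠ {c, d} := by
      intro h'
      have : a ∈ ({c, d} : Finset ℕ) := h' ▸ (by simp)
      simp at this; omega
    rw [Finset.sum_pair hne, pair a b hab, pair c d hcd]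
  · have hne : ({a, d} : Finset ℕ) ≠ {b, c} := by
      intro h'
      have : a ∈ ({b, c} : Finset ℕ) := h' ▸ (by simp)
      simp at this; omega
    rw [Finset.sum_pair hne, pair a d (by omega), pair b c (by omega)]

theorem quad_pair {bs : Finset (Finset ℕ)} {a b c d : ℕ} (hab : a < b) (hcd : c < d)
    (hac : a < c) (hbc : b ≠ c) (hbd : b ≠ d) (hns : nsBlocks bs = {{a, b}, {c, d}}) :
    blockQuad bs = (a, b, c, d) := by
  have hne : ({a, b} : Finset ℕ) ≠ {c, d} := by
    intro h'
    have : a ∈ ({c, d} : Finset ℕ) := h' ▸ (by simp)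
    simp at this; omega
  have hcard : (nsBlocks bs).card = 2 := by rw [hns, Finset.card_pair hne]
  have hmin : fmin ((nsBlocks bs).sup id) = a := by
    rw [hns]
    apply fmin_eq
    · simp
    · simp; omega
  have hA : blockContaining (nsBlocks bs) a = {a, b} := by
    have : (nsBlocks bs).filter (fun β => a ∈ β) = {{a, b}} := by
      rw [hns, Finset.filter_insert, Finset.filter_singleton]
      have : a ∉ ({c, d} : Finset ℕ) := by simp; omega
      simp [this]
    rw [blockContaining, this]; simp
  have hB : ((nsBlocks bs).erase {a, b}).sup id = {c, d} := by
    rw [hns, Finset.erase_insert (by simpa using hne)]; simp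
  simp only [blockQuad, hmin, hA, hB, hcard]
  rw [fmax_eq (a := b) (by simp) (by simp; omega), fmax_eq (a := d) (by simp) (by simp; omega),
    fmin_eq (a := a) (by simp) (by simp; omega), fmin_eq (a := c) (by simp) (by simp; omega)]
  simp

theorem isQ_leap {n : ℕ} {bs : Finset (Finset ℕ)} {t : Bool} {a b c d : ℕ}
    (h : IsQ n bs t a b c d) : leap bs =
      if b = c then b - 2 else if t then (c - 2) + (c - b) else b - 2 := by
  obtain ⟨h1, hab, hbc, hcd, hd, hns⟩ := h
  unfold nsQ at hns
  split_ifs at hns ⊢ with h ht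
  · subst h
    have hmin : fmin ((nsBlocks bs).sup id) = a := by
      rw [hns]
      apply fmin_eq
      · simp
      · simp; omega
    have hA : blockContaining (nsBlocks bs) a = {a, b, d} := by
      rw [blockContaining, hns, Finset.filter_singleton]; simp
    have hl : ({a, b, d} : Finset ℕ).sort (· ≤ ·) = [a, b, d] := by
      apply sort_eq_of
      · simp; omega
      · simp
    have hq : blockQuad bs = (a, b, b, d) := by
      simp only [blockQuad, hmin, hA, hl]
      simp [hns]
    simp [leap, hq]
  · simp [leap, quad_pair hab hcd (by omega) h (by omega) hns]
  · have := quad_pair (a := a) (b := d) (c := b) (d := c) (by omega) (by omega) hab (by omega)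
      (by omega) hns
    simp [leap, this]
    omega

theorem isQ_sizes {n : ℕ} (π : NC n 3) {t : Bool} {a b c d : ℕ}
    (h : IsQ n π.val.blocks t a b c d) : blockSizes π.val.blocks =
      if b = c then {3} + Multiset.replicate (n - 3 + 1 - 1) 1
        else {2, 2} + Multiset.replicate (n - 3 + 1 - 2) 1 := by
  obtain ⟨h1, hab, hbc, hcd, hd, hns⟩ := h
  have key : blockSizes π.val.blocks = (nsBlocks π.val.blocks).val.map Finset.card +
      Multiset.replicate (n - 3 + 1 - (nsBlocks π.val.blocks).card) 1 := by
    have e := Multiset.filter_add_not (fun β : Finset ℕ => 2 ≤ β.card) π.val.blocks.val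
    have hc := π.2.2
    unfold blockSizes
    conv_lhs => rw [← e]
    rw [Multiset.map_add]
    congr 1
    rw [Multiset.eq_replicate]
    constructor
    · rw [Multiset.card_map]
      have := congrArg Multiset.card e
      rw [Multiset.card_add] at this
      have e2 : (nsBlocks π.val.blocks).card =
        (Multiset.filter (fun β : Finset ℕ => 2 ≤ β.card) π.val.blocks.val).card := rfl
      have e3 : π.val.blocks.card = π.val.blocks.val.card := rfl
      omega
    · intro k hk
      obtain ⟨β, hβ, rfl⟩ := Multiset.mem_map.1 hk
      rw [Multiset.mem_filter] at hβ
      have := block_pos π.val hβ.1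
      omega
  have pairs : ∀ β γ : Finset ℕ, β ≠ γ → β.card = 2 → γ.card = 2 →
      ({β, γ} : Finset (Finset ℕ)).val.map Finset.card = {2, 2} := by
    intro β γ hne h1 h2
    rw [Finset.insert_val_of_notMem (by simpa using hne)]
    simp [h1, h2]
  rw [key, hns]
  unfold nsQ
  split_ifs with h ht
  · have hc3 : ({a, b, d} : Finset ℕ).card = 3 :=
      Finset.card_eq_three.2 ⟨a, b, d, by omega, by omega, by omega, rfl⟩
    simp [hc3]
  · have hne : ({a, b} : Finset ℕ) ≠ {c, d} := by
      intro h'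
      have : a ∈ ({c, d} : Finset ℕ) := h' ▸ (by simp)
      simp at this; omega
    rw [pairs _ _ hne (Finset.card_pair (by omega)) (Finset.card_pair (by omega)),
      Finset.card_pair hne]
  · have hne : ({a, d} : Finset ℕ) ≠ {b, c} := by
      intro h'
      have : a ∈ ({b, c} : Finset ℕ) := h' ▸ (by simp)
      simp at this; omega
    rw [pairs _ _ hne (Finset.card_pair (by omega)) (Finset.card_pair (by omega)),
      Finset.card_pair hne]

theorem nsQ_flag {a b c d : ℕ} (hab : a < b) (hbc : b < c) (hcd : c < d) {t t' : Bool}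
    (h : nsQ t a b c d = nsQ t' a b c d) : t = t' := by
  have key : nsQ true a b c d ≠ nsQ false a b c d := by
    intro h
    simp only [nsQ, if_neg hbc.ne, if_true, Bool.false_eq_true, if_false] at h
    have h1 : ({a, b} : Finset ℕ) ∈ ({{a, d}, {b, c}} : Finset (Finset ℕ)) := by
      have : ({a, b} : Finset ℕ) ∈ ({{a, b}, {c, d}} : Finset (Finset ℕ)) := by simp
      exact h ▸ this
    rw [Finset.mem_insert, Finset.mem_singleton] at h1
    rcases h1 with h1 | h1
    · have : b ∈ ({a, d} : Finset ℕ) := h1 ▸ (by simp)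
      simp at this; omega
    · have : a ∈ ({b, c} : Finset ℕ) := h1 ▸ (by simp)
      simp at this; omega
  cases t <;> cases t'
  · rfl
  · exact absurd h.symm key
  · exact absurd h key
  · rfl

/-- The relation whose graph is the bijection. -/
def QRel (n : ℕ) (π ρ : NC n 3) : Prop :=
  ∃ t a b c d, IsQ n π.val.blocks t a b c d ∧
    IsQ n ρ.val.blocks (!t) (d - c) (b + d - a - c) (d - a) d

theorem qRel_symm {n : ℕ} {π ρ : NC n 3} (h : QRel n π ρ) : QRel n ρ π := by
  obtain ⟨t, a, b, c, d, h1, h2⟩ := h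
  refine ⟨_, _, _, _, _, h2, ?_⟩
  obtain ⟨h3, hab, hbc, hcd, hd, hns⟩ := id h1
  rw [show d - (d - a) = a by omega, show b + d - a - c + d - (d - c) - (d - a) = b by omega,
    show d - (d - c) = c by omega, Bool.not_not]
  exact h1

theorem qRel_exists {n : ℕ} (hn : 3 ≤ n) (π : NC n 3) : ∃ ρ, QRel n π ρ := by
  obtain ⟨t, a, b, c, d, h⟩ := exists_isQ hn π
  obtain ⟨h3, hab, hbc, hcd, hd, hns⟩ := id h
  obtain ⟨ρ, hρ⟩ := exists_of_params hn (!t) (d - c) (b + d - a - c) (d - a) d (by omega)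
    (by omega) (by omega) (by omega) hd
  exact ⟨ρ, t, a, b, c, d, h, hρ⟩

theorem qRel_unique {n : ℕ} {π ρ σ : NC n 3} (h : QRel n π ρ) (h' : QRel n π σ) : ρ = σ := by
  obtain ⟨t, a, b, c, d, h1, h2⟩ := h
  obtain ⟨t', a', b', c', d', h1', h2'⟩ := h'
  have e := (isQ_nsList h1).symm.trans (isQ_nsList h1')
  simp at e
  obtain ⟨rfl, rfl, rfl, rfl⟩ := e
  apply nc_ext
  obtain ⟨h3, hab, hbc, hcd, hd, hns⟩ := h1
  rw [h2.2.2.2.2.2, h2'.2.2.2.2.2]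
  by_cases hb : b = c
  · simp only [nsQ, if_pos (show b + d - a - c = d - a by omega)]
  · have := nsQ_flag hab (by omega) hcd (hns.symm.trans h1'.2.2.2.2.2)
    rw [this]

theorem qRel_skip {n : ℕ} {π ρ : NC n 3} (h : QRel n π ρ) :
    skip ρ.val.blocks = leap π.val.blocks := by
  obtain ⟨t, a, b, c, d, h1, h2⟩ := h
  rw [isQ_skip ρ h2, isQ_leap h1]
  obtain ⟨h3, hab, hbc, hcd, hd, hns⟩ := h1
  cases t <;> simp <;> split_ifs <;> omega

/-- For every `n ≥ 3` there is a bijection `ψ` of `NC(n,3)` exchanging the skip and leap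
statistics, preserving the multiset of block sizes, and acting on the elements
`a < b ≤ c < d` of the non-singleton blocks (listed in increasing order, the middle
element of a size-3 block listed twice) by `(a,b,c,d) ↦ (d-c, b+d-a-c, d-a, d)`. -/
theorem exists_skip_leap_exchanging_bijection (n : ℕ) (hn : 3 ≤ n) :
    ∃ ψ : NC n 3 → NC n 3, Function.Bijective ψ ∧
      ∀ π : NC n 3,
        skip (ψ π).val.blocks = leap π.val.blocks ∧
        leap (ψ π).val.blocks = skip π.val.blocks ∧
        blockSizes (ψ π).val.blocks = blockSizes π.val.blocks ∧
        (∀ a b c d : ℕ, a < b → b ≤ c → c < d →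
          nsList π.val.blocks = [a, b, c, d] →
          nsList (ψ π).val.blocks = [d - c, b + d - a - c, d - a, d]) := by

  choose ψ hψ using qRel_exists hn
  refine ⟨ψ, ?_, ?_⟩
  · have hinv : Function.Involutive ψ := fun π => qRel_unique (hψ (ψ π)) (qRel_symm (hψ π))
    exact hinv.bijective
  · intro π
    refine ⟨qRel_skip (hψ π), (qRel_skip (qRel_symm (hψ π))).symm, ?_, ?_⟩
    · obtain ⟨t, a, b, c, d, h1, h2⟩ := hψ π
      rw [isQ_sizes _ h1, isQ_sizes _ h2]
      obtain ⟨h3, hab, hbc, hcd, hd, hns⟩ := h1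
      by_cases hb : b = c
      · rw [if_pos (by omega), if_pos hb]
      · rw [if_neg (by omega), if_neg hb]
    · intro a b c d _ _ _ hl
      obtain ⟨t, a', b', c', d', h1, h2⟩ := hψ π
      rw [isQ_nsList h1] at hl
      simp at hl
      obtain ⟨rfl, rfl, rfl, rfl⟩ := hl
      exact isQ_nsList h2

end QtN
end

section
/- For all n ≥ 3 and all natural numbers u, v, the number of π ∈ NC(n,3) with skip(π) = u and skew(π) = v equals the number of parallelogram polyominoes P ∈ PP(n−2,3) with area(P) = u and bounce(P) = v. (The pair (skip, skew) is a combinatorial interpretation of the q,t-Narayana polynomial N_{n,3}(q,t).) -/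
namespace QtN

section
open Step

def enc (a b c d : ℕ) : List Step :=
  List.replicate a E ++ N :: (List.replicate b E ++ N :: (List.replicate c E ++ N :: List.replicate d E))

lemma split0 (w : List Step) (h : countN w = 0) : w = List.replicate (countE w) E := by
  induction w with
  | nil => rfl
  | cons s w ih =>
    cases s
    · have : countN w = 0 := by simpa [countN] using h
      have e : countE (E :: w) = countE w + 1 := by simp [countE]
      rw [e, List.replicate_succ, ← ih this]
    · simp [countN] at h

lemma splitS (w : List Step) (k : ℕ) (h : countN w = k + 1) :
    ∃ a w', w = List.replicate a E ++ N :: w' ∧ countN w' = k ∧ countE w = a + countE w' := by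
  induction w with
  | nil => simp [countN] at h
  | cons s w ih =>
    cases s
    · have : countN w = k + 1 := by simpa [countN] using h
      obtain ⟨a, w', rfl, h1, h2⟩ := ih this
      refine ⟨a + 1, w', by simp [List.replicate_succ], h1, ?_⟩
      simp [countE, List.replicate_succ] at *
      omega
    · exact ⟨0, w, by simp, by simpa [countN] using h, by simp [countE]⟩

lemma split3 (w : List Step) (m : ℕ) (h : countN w = 3) (hm : countE w = m) :
    ∃ a b c d, w = enc a b c d ∧ a + b + c + d = m := by
  obtain ⟨a, w1, rfl, h1, e1⟩ := splitS w 2 h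
  obtain ⟨b, w2, rfl, h2, e2⟩ := splitS w1 1 h1
  obtain ⟨c, w3, rfl, h3, e3⟩ := splitS w2 0 h2
  refine ⟨a, b, c, countE w3, ?_, by omega⟩
  rw [enc, ← split0 w3 h3]

lemma encE (a b c d : ℕ) : countE (enc a b c d) = a + b + c + d := by
  simp [countE, enc, List.count_replicate, List.count_cons]; omega
lemma encN (a b c d : ℕ) : countN (enc a b c d) = 3 := by
  simp [countN, enc, List.count_replicate, List.count_cons]

lemma inj1 : ∀ (a a' : ℕ) (w w' : List Step),
    List.replicate a E ++ N :: w = List.replicate a' E ++ N :: w' → a = a' ∧ w = w'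
  | 0, 0, w, w', h => by simpa using h
  | a+1, 0, w, w', h => by simp [List.replicate_succ] at h
  | 0, a'+1, w, w', h => by simp [List.replicate_succ] at h
  | a+1, a'+1, w, w', h => by
    simp [List.replicate_succ] at h
    have := inj1 a a' w w' h
    exact ⟨by rw [this.1], this.2⟩

lemma enc_inj {a b c d a' b' c' d' : ℕ} (h : enc a b c d = enc a' b' c' d') :
    a = a' ∧ b = b' ∧ c = c' ∧ d = d' := by
  obtain ⟨h1, h⟩ := inj1 _ _ _ _ h
  obtain ⟨h2, h⟩ := inj1 _ _ _ _ h
  obtain ⟨h3, h⟩ := inj1 _ _ _ _ h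
  refine ⟨h1, h2, h3, ?_⟩
  simpa using congrArg List.length h

lemma mem_pts (w : List Step) (p : ℕ × ℕ) :
    p ∈ pathPts w ↔ ∃ i ≤ w.length, pathPos (w.take i) = p := by
  simp [pathPts, Nat.lt_succ_iff]

lemma pts_nil (p : ℕ × ℕ) : p ∈ pathPts [] ↔ p = (0, 0) := by
  simp [mem_pts, pathPos, countE, countN, eq_comm]

lemma pts_E (w : List Step) (x y : ℕ) :
    (x, y) ∈ pathPts (E :: w) ↔ (x = 0 ∧ y = 0) ∨ (1 ≤ x ∧ (x - 1, y) ∈ pathPts w) := by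
  simp only [mem_pts]
  constructor
  · rintro ⟨i, hi, h⟩
    cases i with
    | zero => left; simp [pathPos, countE, countN] at h; omega
    | succ i =>
      right
      simp [pathPos, countE, countN] at h hi
      refine ⟨by omega, i, hi, ?_⟩
      simp [pathPos, countE, countN]; omega
  · rintro (⟨rfl, rfl⟩ | ⟨hx, i, hi, h⟩)
    · exact ⟨0, by simp, rfl⟩
    · refine ⟨i + 1, by simpa using hi, ?_⟩
      simp [pathPos, countE, countN] at h ⊢
      omega

lemma pts_N (w : List Step) (x y : ℕ) :
    (x, y) ∈ pathPts (N :: w) ↔ (x = 0 ∧ y = 0) ∨ (1 ≤ y ∧ (x, y - 1) ∈ pathPts w) := by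
  simp only [mem_pts]
  constructor
  · rintro ⟨i, hi, h⟩
    cases i with
    | zero => left; simp [pathPos, countE, countN] at h; omega
    | succ i =>
      right
      simp [pathPos, countE, countN] at h hi
      refine ⟨by omega, i, hi, ?_⟩
      simp [pathPos, countE, countN]; omega
  · rintro (⟨rfl, rfl⟩ | ⟨hx, i, hi, h⟩)
    · exact ⟨0, by simp, rfl⟩
    · refine ⟨i + 1, by simpa using hi, ?_⟩
      simp [pathPos, countE, countN] at h ⊢
      omega

lemma pts_zero (w : List Step) : (0, 0) ∈ pathPts w := by
  rw [mem_pts]; exact ⟨0, by simp, rfl⟩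

lemma pts_rep (a : ℕ) (w : List Step) : ∀ (x y : ℕ),
    (x, y) ∈ pathPts (List.replicate a E ++ w) ↔
      (y = 0 ∧ x ≤ a) ∨ (a ≤ x ∧ (x - a, y) ∈ pathPts w) := by
  induction a with
  | zero =>
    intro x y
    simp
    rintro rfl rfl; exact pts_zero w
  | succ a ih =>
    intro x y
    rw [List.replicate_succ, List.cons_append, pts_E, ih]
    have : x - 1 - a = x - (a + 1) := by omega
    rw [this]
    constructor
    · rintro (h | ⟨h1, h | h⟩)
      · left; omega
      · left; omega
      · right; exact ⟨by omega, h.2⟩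
    · rintro (h | h)
      · by_cases hx : x = 0
        · left; omega
        · right; exact ⟨by omega, Or.inl (by omega)⟩
      · right; exact ⟨by omega, Or.inr ⟨by omega, h.2⟩⟩

lemma pts_enc (a b c d x y : ℕ) :
    (x, y) ∈ pathPts (enc a b c d) ↔
      (y = 0 ∧ x ≤ a) ∨ (y = 1 ∧ a ≤ x ∧ x ≤ a + b) ∨ (y = 2 ∧ a + b ≤ x ∧ x ≤ a + b + c) ∨
      (y = 3 ∧ a + b + c ≤ x ∧ x ≤ a + b + c + d) := by
  have e : List.replicate d E = List.replicate d E ++ [] := by simp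
  rw [enc, e]
  simp only [pts_rep, pts_N, pts_nil, Prod.mk.injEq]
  omega

lemma ch_rep (a : ℕ) (w : List Step) : ∀ (i h : ℕ),
    (colHeightsAux (List.replicate a E ++ w) h).getD i 0 =
      if i < a then h else (colHeightsAux w h).getD (i - a) 0 := by
  induction a with
  | zero => intro i h; simp
  | succ a ih =>
    intro i h
    rw [List.replicate_succ, List.cons_append, colHeightsAux]
    cases i with
    | zero => simp
    | succ i => rw [List.getD_cons_succ, ih]; simp

lemma ch_enc (a b c d i : ℕ) :
    colHeight (enc a b c d) i = if i < a then 0 else if i < a + b then 1 else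
      if i < a + b + c then 2 else if i < a + b + c + d then 3 else 0 := by
  have e : List.replicate d E = List.replicate d E ++ [] := by simp
  rw [colHeight, enc, e]
  simp only [ch_rep, colHeightsAux]
  have : ([] : List ℕ).getD (i - a - b - c - d) 0 = 0 := by simp
  rw [this]
  split_ifs <;> omega

end


lemma sum_ind (m k : ℕ) (hk : k ≤ m) :
    ∑ i ∈ Finset.range m, (if k ≤ i then 1 else 0) = m - k := by
  induction m with
  | zero => simp
  | succ m ih =>
    rw [Finset.sum_range_succ]
    by_cases h : k ≤ m
    · rw [ih h, if_pos h]; omega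
    · have : k = m + 1 := by omega
      subst this
      rw [if_neg (by omega)]
      rw [Finset.sum_eq_zero]
      · omega
      · intro i hi; rw [if_neg]; simp at hi; omega

lemma eastT (hL : ℕ → ℕ) (m x y t : ℕ) (htm : t ≤ m) (h1 : ∀ i < t, ¬ (x ≤ i ∧ y ≤ hL i))
    (h2 : t < m → x ≤ t ∧ y ≤ hL t) : eastTarget hL m x y = t := by
  obtain ⟨k, rfl⟩ := Nat.exists_eq_add_of_le htm
  rw [eastTarget, List.range_add, List.filter_append]
  have e : (List.range t).filter (fun i => decide (x ≤ i ∧ y ≤ hL i)) = [] := by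
    rw [List.filter_eq_nil_iff]
    intro i hi
    have := h1 i (by simpa using hi)
    simpa using this
  rw [e, List.nil_append]
  cases k with
  | zero => simp
  | succ k =>
    have := h2 (by omega)
    rw [List.range_succ_eq_map]
    simp [this]

lemma bounce_eval (m x1 x2 y2 y3 : ℕ) (hU hL : ℕ → ℕ)
    (hy : y2 ≤ y3) (h1 : y3 < x2) (h2 : x2 ≤ m) (h3 : y2 < x1) (h4 : x1 ≤ x2)
    (HU : ∀ i < m, hU i = if i < y2 then 1 else if i < y3 then 2 else 3)
    (HL : ∀ i < m, hL i = if i < x1 then 0 else if i < x2 then 1 else 2) :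
    bounceAux hU hL m 3 (m + 3 + 2) 1 0 0 - (m + 3 - 1) =
      if y2 = 0 then (if y3 = 0 then 0 else 1 + m - x2)
      else if y3 < x1 then 2 + m - x1 else 3 + 2 * m - x1 - x2 := by
  have U0 := HU 0 (by omega)
  have U1 := HU (x1 - 1) (by omega)
  have U2 := HU (x2 - 1) (by omega)
  have E1 : eastTarget hL m 1 1 = x1 := by
    apply eastT _ _ _ _ _ (by omega)
    · intro i hi; rw [HL i (by omega), if_pos hi]; omega
    · intro h; rw [HL _ h]; split_ifs <;> omega
  have E2 : ∀ x, x ≤ x2 → eastTarget hL m x 2 = x2 := by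
    intro x hx
    apply eastT _ _ _ _ _ (by omega)
    · intro i hi; rw [HL i (by omega)]; split_ifs <;> omega
    · intro h; rw [HL _ h]; split_ifs <;> omega
  have Z : ∀ f j, bounceAux hU hL m 3 f m 3 j = 0 := by
    intro f j; cases f <;> simp [bounceAux]
  by_cases c2 : y2 = 0
  · by_cases c3 : y3 = 0
    · have : hU 0 = 3 := by rw [U0]; simp [c2, c3]
      simp [bounceAux, this, Z, c2, c3]
      omega
    · have t0 : hU 0 = 2 := by rw [U0, if_neg (by omega), if_pos (by omega)]
      have t1 : hU (x2 - 1) = 3 := by rw [U2, if_neg (by omega), if_neg (by omega)]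
      simp [bounceAux, t0, t1, Z, c2, c3, E2 1 (by omega)]
      omega
  · have t0 : hU 0 = 1 := by rw [U0, if_pos (by omega)]
    have t2 : hU (x2 - 1) = 3 := by rw [U2, if_neg (by omega), if_neg (by omega)]
    by_cases c3 : y3 < x1
    · have t1 : hU (x1 - 1) = 3 := by rw [U1, if_neg (by omega), if_neg (by omega)]
      simp [bounceAux, t0, t1, Z, c2, c3, E1]
      omega
    · have t1 : hU (x1 - 1) = 2 := by rw [U1, if_neg (by omega), if_pos (by omega)]
      simp [bounceAux, t0, t1, t2, Z, c2, c3, E1, E2 x1 h4]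
      omega

lemma area_eval (m x1 x2 y2 y3 : ℕ) (hU hL : ℕ → ℕ)
    (hy : y2 ≤ y3) (h1 : y3 < x2) (h2 : x2 ≤ m) (h3 : y2 < x1) (h4 : x1 ≤ x2)
    (HU : ∀ i < m, hU i = if i < y2 then 1 else if i < y3 then 2 else 3)
    (HL : ∀ i < m, hL i = if i < x1 then 0 else if i < x2 then 1 else 2) :
    (∑ i ∈ Finset.range m, (hU i - hL i)) - (m + 3 - 1) = x1 + x2 - y2 - y3 - 2 := by
  have key : (∑ i ∈ Finset.range m, (hU i - hL i)) + (∑ i ∈ Finset.range m, (if x1 ≤ i then 1 else 0))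
      + (∑ i ∈ Finset.range m, (if x2 ≤ i then 1 else 0)) =
      (∑ i ∈ Finset.range m, (if y2 ≤ i then 1 else 0)) + (∑ i ∈ Finset.range m, (if y3 ≤ i then 1 else 0))
      + ∑ i ∈ Finset.range m, 1 := by
    simp only [← Finset.sum_add_distrib]
    apply Finset.sum_congr rfl
    intro i hi
    have hi : i < m := by simpa using hi
    rw [HU i hi, HL i hi]
    split_ifs <;> omega
  rw [sum_ind _ _ (by omega), sum_ind _ _ (by omega), sum_ind _ _ (by omega),
    sum_ind _ _ (by omega)] at key
  simp at key
  omega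

def PPc (m : ℕ) (x1 x2 y2 y3 : ℕ) : Prop :=
  y2 ≤ y3 ∧ y3 < x2 ∧ x2 ≤ m ∧ y2 < x1 ∧ x1 ≤ x2

def mkP (m x1 x2 y2 y3 : ℕ) (h : PPc m x1 x2 y2 y3) : Polyomino m 3 where
  lower := enc x1 (x2 - x1) (m - x2) 0
  upper := enc 0 y2 (y3 - y2) (m - y3)
  lowerE := by rw [encE]; simp only [PPc] at h; omega
  lowerN := encN _ _ _ _
  upperE := by rw [encE]; simp only [PPc] at h; omega
  upperN := encN _ _ _ _
  above := by
    intro i hi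
    simp only [PPc] at h
    rw [ch_enc, ch_enc]
    split_ifs <;> omega
  meet := by
    simp only [PPc] at h
    ext ⟨x, y⟩
    simp only [Finset.mem_inter, pts_enc, Finset.mem_insert, Finset.mem_singleton, Prod.mk.injEq]
    omega

lemma mkP_surj (m : ℕ) (P : Polyomino m 3) :
    ∃ x1 x2 y2 y3, ∃ h : PPc m x1 x2 y2 y3, mkP m x1 x2 y2 y3 h = P := by
  obtain ⟨L, U, LE, LN, UE, UN, ab, me⟩ := P
  obtain ⟨a, b, c, d, rfl, hL⟩ := split3 L m LN LE
  obtain ⟨a', b', c', d', rfl, hU⟩ := split3 U m UN UE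
  have M : ∀ x y, (x, y) ∈ pathPts (enc a' b' c' d') ∩ pathPts (enc a b c d) ↔
      (x, y) ∈ ({(0, 0), (m, 3)} : Finset (ℕ × ℕ)) := by intro x y; rw [me]
  simp only [Finset.mem_inter, pts_enc, Finset.mem_insert, Finset.mem_singleton,
    Prod.mk.injEq] at M
  simp only [ch_enc] at ab
  have h1 : a' = 0 := by
    by_contra hne
    have hab := ab 0 (by omega)
    rw [if_pos (show 0 < a' by omega)] at hab
    have ha : 0 < a := by
      by_contra h0
      rw [if_neg h0] at hab
      split_ifs at hab <;> omega
    have := M 1 0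
    omega
  subst h1
  have h2 : 0 < a := by
    have := M 0 1
    omega
  have h3 : b' < a := by
    have := M a 1
    omega
  have h4 : b' + c' < a + b := by
    have := M (a + b) 2
    omega
  have h5 : a + b + c = m := by
    have := M (a + b + c) 3
    omega
  refine ⟨a, a + b, b', b' + c', ⟨by omega, h4, by omega, h3, by omega⟩, ?_⟩
  have e1 : a + b - a = b := by omega
  have e2 : m - (a + b) = c := by omega
  have e3 : b' + c' - b' = c' := by omega
  have e4 : m - (b' + c') = d' := by omega
  have e5 : d = 0 := by omega
  simp only [mkP, e1, e2, e3, e4, e5]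

lemma mkP_inj (m x1 x2 y2 y3 z1 z2 w2 w3 : ℕ) (h : PPc m x1 x2 y2 y3) (h' : PPc m z1 z2 w2 w3)
    (e : mkP m x1 x2 y2 y3 h = mkP m z1 z2 w2 w3 h') : x1 = z1 ∧ x2 = z2 ∧ y2 = w2 ∧ y3 = w3 := by
  have e1 := enc_inj (congrArg Polyomino.lower e)
  have e2 := enc_inj (congrArg Polyomino.upper e)
  simp only [PPc] at h h'
  omega

lemma mkP_U (m x1 x2 y2 y3 : ℕ) (h : PPc m x1 x2 y2 y3) : ∀ i < m,
    colHeight (mkP m x1 x2 y2 y3 h).upper i = if i < y2 then 1 else if i < y3 then 2 else 3 := by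
  intro i hi
  simp only [mkP, ch_enc]
  simp only [PPc] at h
  split_ifs <;> omega
lemma mkP_L (m x1 x2 y2 y3 : ℕ) (h : PPc m x1 x2 y2 y3) : ∀ i < m,
    colHeight (mkP m x1 x2 y2 y3 h).lower i = if i < x1 then 0 else if i < x2 then 1 else 2 := by
  intro i hi
  simp only [mkP, ch_enc]
  simp only [PPc] at h
  split_ifs <;> omega

abbrev Q4 := ℕ × ℕ × ℕ × ℕ
def ppA (x1 x2 y2 y3 : ℕ) : ℕ := x1 + x2 - y2 - y3 - 2
def ppB (m : ℕ) (x1 x2 y2 y3 : ℕ) : ℕ :=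
  if y2 = 0 then (if y3 = 0 then 0 else 1 + m - x2)
  else if y3 < x1 then 2 + m - x1 else 3 + 2 * m - x1 - x2
def PPS (m u v : ℕ) (x : Q4) : Prop :=
  PPc m x.1 x.2.1 x.2.2.1 x.2.2.2 ∧ ppA x.1 x.2.1 x.2.2.1 x.2.2.2 = u ∧
    ppB m x.1 x.2.1 x.2.2.1 x.2.2.2 = v

lemma card_P (m u v : ℕ) :
    Nat.card {x // PPS m u v x} = Nat.card {P : Polyomino m 3 // area P = u ∧ bounce P = v} := by
  have A : ∀ x1 x2 y2 y3 h, area (mkP m x1 x2 y2 y3 h) = ppA x1 x2 y2 y3 := by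
    intro x1 x2 y2 y3 h
    exact area_eval m x1 x2 y2 y3 _ _ h.1 h.2.1 h.2.2.1 h.2.2.2.1 h.2.2.2.2
      (mkP_U m x1 x2 y2 y3 h) (mkP_L m x1 x2 y2 y3 h)
  have B : ∀ x1 x2 y2 y3 h, bounce (mkP m x1 x2 y2 y3 h) = ppB m x1 x2 y2 y3 := by
    intro x1 x2 y2 y3 h
    exact bounce_eval m x1 x2 y2 y3 _ _ h.1 h.2.1 h.2.2.1 h.2.2.2.1 h.2.2.2.2
      (mkP_U m x1 x2 y2 y3 h) (mkP_L m x1 x2 y2 y3 h)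
  refine Nat.card_congr (Equiv.ofBijective
    (fun x => ⟨mkP m x.1.1 x.1.2.1 x.1.2.2.1 x.1.2.2.2 x.2.1, ?_⟩) ⟨?_, ?_⟩)
  · rw [A, B]; exact x.2.2
  · rintro ⟨⟨x1, x2, y2, y3⟩, hx⟩ ⟨⟨z1, z2, w2, w3⟩, hz⟩ e
    have := mkP_inj _ _ _ _ _ _ _ _ _ hx.1 hz.1 (congrArg Subtype.val e)
    obtain ⟨rfl, rfl, rfl, rfl⟩ := this
    rfl
  · rintro ⟨P, hP⟩
    obtain ⟨x1, x2, y2, y3, h, rfl⟩ := mkP_surj m P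
    rw [A, B] at hP
    exact ⟨⟨(x1, x2, y2, y3), h, hP⟩, rfl⟩

/-- Add singletons. -/
def fill (n : ℕ) (F : Finset (Finset ℕ)) : Finset (Finset ℕ) :=
  F ∪ (Finset.Icc 1 n \ F.sup id).image (fun i => {i})

lemma mem_fill {n : ℕ} {F : Finset (Finset ℕ)} {β : Finset ℕ} :
    β ∈ fill n F ↔ β ∈ F ∨ ∃ i, (1 ≤ i ∧ i ≤ n) ∧ (∀ γ ∈ F, i ∉ γ) ∧ β = {i} := by
  simp only [fill, Finset.mem_union, Finset.mem_image, Finset.mem_sdiff, Finset.mem_Icc,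
    Finset.mem_sup, id]
  constructor
  · rintro (h | ⟨i, ⟨h1, h2⟩, rfl⟩)
    · exact Or.inl h
    · exact Or.inr ⟨i, h1, fun γ hγ hi => h2 ⟨γ, hγ, hi⟩, rfl⟩
  · rintro (h | ⟨i, h1, h2, rfl⟩)
    · exact Or.inl h
    · exact Or.inr ⟨i, ⟨h1, fun ⟨γ, hγ, hi⟩ => h2 γ hγ hi⟩, rfl⟩

structure Good (n : ℕ) (F : Finset (Finset ℕ)) : Prop where
  two : ∀ β ∈ F, 2 ≤ β.card
  sub : ∀ β ∈ F, ∀ i ∈ β, 1 ≤ i ∧ i ≤ n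
  disj : ∀ β ∈ F, ∀ γ ∈ F, β ≠ γ → Disjoint β γ

lemma fill_ns {n : ℕ} {F : Finset (Finset ℕ)} (h : Good n F) : nsBlocks (fill n F) = F := by
  ext β
  simp only [nsBlocks, Finset.mem_filter, mem_fill]
  constructor
  · rintro ⟨h1 | ⟨i, _, _, rfl⟩, h2⟩
    · exact h1
    · simp at h2
  · intro hb; exact ⟨Or.inl hb, h.two β hb⟩

lemma fill_disj {n : ℕ} {F : Finset (Finset ℕ)} (h : Good n F) :
    Disjoint F ((Finset.Icc 1 n \ F.sup id).image (fun i => ({i} : Finset ℕ))) := by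
  rw [Finset.disjoint_left]
  intro β hb hc
  simp only [Finset.mem_image] at hc
  obtain ⟨i, _, rfl⟩ := hc
  have := h.two _ hb
  simp at this

lemma fill_card {n : ℕ} {F : Finset (Finset ℕ)} (h : Good n F) :
    (fill n F).card = F.card + (n - (F.sup id).card) := by
  rw [fill, Finset.card_union_of_disjoint (fill_disj h),
    Finset.card_image_of_injective _ (fun i j e => by simpa using e), Finset.card_sdiff_of_subset]
  · simp
  · intro i hi
    simp only [Finset.mem_sup, id] at hi
    obtain ⟨γ, h1, h2⟩ := hi
    have := h.sub γ h1 i h2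
    simpa using this

lemma fmax_sing (i : ℕ) : fmax {i} = i := by simp [fmax]
lemma fmin_sing (i : ℕ) : fmin {i} = i := by simp [fmin]

lemma fill_skip {n : ℕ} {F : Finset (Finset ℕ)} (h : Good n F) :
    skip (fill n F) = skip F := by
  rw [skip, fill, Finset.sum_union (fill_disj h), skip, Nat.add_eq_left]
  apply Finset.sum_eq_zero
  intro β hb
  simp only [Finset.mem_image] at hb
  obtain ⟨i, _, rfl⟩ := hb
  simp [fmax_sing, fmin_sing]

def fillP (n : ℕ) (F : Finset (Finset ℕ)) (h : Good n F) : SetPartition n where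
  blocks := fill n F
  not_empty_mem := by
    rw [mem_fill]
    rintro (h1 | ⟨i, _, _, h1⟩)
    · have := h.two _ h1; simp at this
    · exact (Finset.singleton_ne_empty i) h1.symm
  cover := by
    intro i
    simp only [mem_fill, Finset.mem_Icc]
    constructor
    · intro hi
      by_cases hf : ∃ γ ∈ F, i ∈ γ
      · obtain ⟨γ, h1, h2⟩ := hf; exact ⟨γ, Or.inl h1, h2⟩
      · push Not at hf
        exact ⟨{i}, Or.inr ⟨i, hi, hf, rfl⟩, by simp⟩
    · rintro ⟨β, h1 | ⟨j, h1, _, rfl⟩, h2⟩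
      · exact h.sub _ h1 _ h2
      · simp at h2; rw [h2]; exact h1
  disjoint := by
    intro β hb γ hc hne
    rw [mem_fill] at hb hc
    rcases hb with hb | ⟨i, _, hi, rfl⟩ <;> rcases hc with hc | ⟨j, _, hj, rfl⟩
    · exact h.disj _ hb _ hc hne
    · simpa using hj _ hb
    · simpa using hi _ hc
    · simpa using fun e => hne (by rw [e])

lemma fill_nc {n : ℕ} {F : Finset (Finset ℕ)} (h : Good n F) :
    IsNoncrossing (fill n F) ↔ IsNoncrossing F := by
  constructor
  · intro H a b c d h1 h2 h3 β hβ γ hγ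
    exact H a b c d h1 h2 h3 β (mem_fill.2 (Or.inl hβ)) γ (mem_fill.2 (Or.inl hγ))
  · intro H a b c d h1 h2 h3 β hβ γ hγ ha hc hb hd
    rw [mem_fill] at hβ hγ
    rcases hβ with hβ | ⟨i, _, hi, rfl⟩
    · rcases hγ with hγ | ⟨j, _, hj, rfl⟩
      · exact H a b c d h1 h2 h3 β hβ γ hγ ha hc hb hd
      · simp at hb hd; omega
    · simp at ha hc; omega

lemma fill_of (n : ℕ) (P : SetPartition n) :
    Good n (nsBlocks P.blocks) ∧ fill n (nsBlocks P.blocks) = P.blocks := by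
  refine ⟨⟨?_, ?_, ?_⟩, ?_⟩
  · intro β hb; exact (Finset.mem_filter.1 hb).2
  · intro β hb i hi
    have := (P.cover i).2 ⟨β, (Finset.mem_filter.1 hb).1, hi⟩
    simpa using this
  · intro β hb γ hc
    exact P.disjoint β (Finset.mem_filter.1 hb).1 γ (Finset.mem_filter.1 hc).1
  · ext β
    rw [mem_fill]
    constructor
    · rintro (hb | ⟨i, hi, h1, rfl⟩)
      · exact (Finset.mem_filter.1 hb).1
      · obtain ⟨β, hb, hib⟩ := (P.cover i).1 (by simpa using hi)
        have : ¬ 2 ≤ β.card := fun h2 => h1 β (Finset.mem_filter.2 ⟨hb, h2⟩) hib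
        have hp : 0 < β.card := Finset.card_pos.2 ⟨i, hib⟩
        obtain ⟨j, rfl⟩ := Finset.card_eq_one.1 (show β.card = 1 by omega)
        simp at hib; subst hib; exact hb
    · intro hb
      by_cases h2 : 2 ≤ β.card
      · exact Or.inl (Finset.mem_filter.2 ⟨hb, h2⟩)
      · right
        have hne : β ≠ ∅ := fun e => P.not_empty_mem (e ▸ hb)
        have hp : 0 < β.card := Finset.card_pos.2 (Finset.nonempty_iff_ne_empty.2 hne)
        obtain ⟨j, rfl⟩ := Finset.card_eq_one.1 (show β.card = 1 by omega)
        refine ⟨j, ?_, ?_, rfl⟩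
        · have := (P.cover j).2 ⟨_, hb, by simp⟩
          simpa using this
        · intro γ hc hj
          have hc' := Finset.mem_filter.1 hc
          by_cases e : ({j} : Finset ℕ) = γ
          · subst e; simp at hc'
          · have := P.disjoint _ hb _ hc'.1 e
            simp at this; exact this hj

lemma sup_card {n : ℕ} {F : Finset (Finset ℕ)} (h : Good n F) :
    (F.sup id).card = ∑ β ∈ F, β.card := by
  rw [Finset.sup_eq_biUnion, Finset.card_biUnion]
  · rfl
  · intro β hb γ hc hne; exact h.disj β hb γ hc hne

/-- the ns family from the tuple -/
def fam (a b c d : ℕ) : Finset (Finset ℕ) := if b = c then {{a, b, d}} else {{a, b}, {c, d}}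

def NCc (n : ℕ) (a b c d : ℕ) : Prop :=
  1 ≤ a ∧ a < b ∧ a < c ∧ c ≤ n ∧ b ≤ n ∧ d ≤ n ∧ c < d ∧ (b ≤ c ∨ d < b)

lemma card3 {a b c : ℕ} (h1 : a < b) (h2 : b < c) : ({a, b, c} : Finset ℕ).card = 3 := by
  rw [Finset.card_eq_three]; exact ⟨a, b, c, by omega, by omega, by omega, rfl⟩

lemma pair_ne {a b c d : ℕ} (h1 : a < b) (h2 : a < c) (h3 : c < d) :
    ({a, b} : Finset ℕ) ≠ {c, d} := by
  intro e
  have : a ∈ ({c, d} : Finset ℕ) := by rw [← e]; simp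
  simp at this; omega

lemma fam_good {n a b c d : ℕ} (h : NCc n a b c d) : Good n (fam a b c d) := by
  simp only [NCc] at h
  unfold fam
  split_ifs with e
  · subst e
    refine ⟨?_, ?_, ?_⟩
    · simp only [Finset.mem_singleton, forall_eq]
      rw [card3 (by omega) (by omega)]; omega
    · simp only [Finset.mem_singleton, forall_eq, Finset.mem_insert]; omega
    · simp
  · have hd : Disjoint ({a, b} : Finset ℕ) {c, d} := by
      simp; omega
    refine ⟨?_, ?_, ?_⟩
    · simp only [Finset.mem_singleton, Finset.mem_insert, forall_eq_or_imp, forall_eq]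
      rw [Finset.card_pair (by omega), Finset.card_pair (by omega)]; omega
    · simp only [Finset.mem_singleton, Finset.mem_insert, forall_eq_or_imp, forall_eq]; omega
    · simp only [Finset.mem_singleton, Finset.mem_insert, forall_eq_or_imp, forall_eq]
      exact ⟨⟨fun h => absurd rfl h, fun _ => hd⟩, ⟨fun _ => hd.symm, fun h => absurd rfl h⟩⟩

lemma fam_sum {n a b c d : ℕ} (h : NCc n a b c d) (hn : 3 ≤ n) :
    (fill n (fam a b c d)).card = n - 3 + 1 := by
  rw [fill_card (fam_good h), sup_card (fam_good h)]
  simp only [NCc] at h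
  unfold fam
  split_ifs with e
  · subst e
    rw [Finset.sum_singleton, card3 (by omega) (by omega), Finset.card_singleton]; omega
  · have hne := pair_ne (a := a) (b := b) (c := c) (d := d) (by omega) (by omega) (by omega)
    rw [Finset.sum_pair hne, Finset.card_pair hne, Finset.card_pair (by omega),
      Finset.card_pair (by omega)]
    omega

lemma fam_nc {n a b c d : ℕ} (h : NCc n a b c d) : IsNoncrossing (fam a b c d) := by
  simp only [NCc] at h
  intro p q r s h1 h2 h3 β hb γ hc
  unfold fam at hb hc
  split_ifs at hb hc with e
  · simp at hb hc; subst hb; subst hc; intros; rfl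
  · simp only [Finset.mem_singleton, Finset.mem_insert] at hb hc
    rcases hb with rfl | rfl <;> rcases hc with rfl | rfl <;>
      simp only [Finset.mem_singleton, Finset.mem_insert] <;> intro h4 h5 h6 h7 <;> (try trivial)
    all_goals (exfalso; omega)

lemma fmax_pair {a b : ℕ} (h : a < b) : fmax {a, b} = b := by
  simp [fmax]; omega
lemma fmin_pair {a b : ℕ} (h : a < b) : fmin {a, b} = a := by
  rw [fmin, dif_pos (by simp)]
  apply le_antisymm
  · exact Finset.min'_le _ _ (by simp)
  · apply Finset.le_min'; simp; omega
lemma fmax_tri {a b c : ℕ} (h : a < b) (h' : b < c) : fmax {a, b, c} = c := by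
  simp [fmax]; omega
lemma fmin_tri {a b c : ℕ} (h : a < b) (h' : b < c) : fmin {a, b, c} = a := by
  rw [fmin, dif_pos (by simp)]
  apply le_antisymm
  · exact Finset.min'_le _ _ (by simp)
  · apply Finset.le_min'; simp; omega
lemma fmin_four {a b c d : ℕ} (h : a < b) (h' : a < c) (h'' : c < d) :
    fmin ({a, b} ∪ {c, d}) = a := by
  rw [fmin, dif_pos (by simp)]
  apply le_antisymm
  · exact Finset.min'_le _ _ (by simp)
  · apply Finset.le_min'
    simp only [Finset.mem_union, Finset.mem_insert, Finset.mem_singleton]; omega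

def ncA (a b c d : ℕ) : ℕ := if b = c then d - a - 2 else (b - a - 1) + (d - c - 1)
def ncB (a b c _d : ℕ) : ℕ := if b < c then c - 2 + a else c - 2

lemma fam_skip {n a b c d : ℕ} (h : NCc n a b c d) : skip (fam a b c d) = ncA a b c d := by
  simp only [NCc] at h
  unfold fam ncA
  split_ifs with e
  · subst e
    rw [skip, Finset.sum_singleton, card3 (by omega) (by omega), fmax_tri (by omega) (by omega),
      fmin_tri (by omega) (by omega)]
    omega
  · have hne := pair_ne (a := a) (b := b) (c := c) (d := d) (by omega) (by omega) (by omega)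
    rw [skip, Finset.sum_pair hne, Finset.card_pair (by omega), Finset.card_pair (by omega),
      fmax_pair (by omega), fmax_pair (by omega), fmin_pair (by omega), fmin_pair (by omega)]
    omega

lemma sort3 {a b c : ℕ} (h : a < b) (h' : b < c) :
    ({a, b, c} : Finset ℕ).sort (· ≤ ·) = [a, b, c] := by
  rw [Finset.sort_insert (r := (· ≤ ·)) (a := a) (s := {b, c}) (by simp; omega) (by simp; omega),
    Finset.sort_insert (r := (· ≤ ·)) (a := b) (s := {c}) (by simp; omega) (by simp; omega),
    Finset.sort_singleton]

lemma fam_quad {n a b c d : ℕ} (h : NCc n a b c d) :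
    blockQuad (fill n (fam a b c d)) = (a, b, c, d) := by
  unfold blockQuad
  rw [fill_ns (fam_good h)]
  simp only [NCc] at h
  unfold fam
  split_ifs with e h1 h1
  · subst e
    have : blockContaining {{a, b, d}} (fmin (({{a, b, d}} : Finset (Finset ℕ)).sup id)) = {a, b, d} := by
      rw [Finset.sup_singleton, id, fmin_tri (by omega) (by omega)]
      simp [blockContaining, Finset.filter_singleton]
    simp only [this]
    rw [sort3 (by omega) (by omega)]
    rfl
  · simp at h1
  · have hne := pair_ne (a := a) (b := b) (c := c) (d := d) (by omega) (by omega) (by omega)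
    rw [Finset.card_pair hne] at h1; omega
  · have hne := pair_ne (a := a) (b := b) (c := c) (d := d) (by omega) (by omega) (by omega)
    have : blockContaining {{a, b}, {c, d}}
        (fmin (({{a, b}, {c, d}} : Finset (Finset ℕ)).sup id)) = {a, b} := by
      rw [Finset.sup_insert, Finset.sup_singleton, id, id, Finset.sup_eq_union,
        fmin_four (by omega) (by omega) (by omega)]
      rw [blockContaining, Finset.filter_insert, Finset.filter_singleton, if_pos (by simp),
        if_neg (by simp; omega)]
      simp
    have e2 : ({{a, b}, {c, d}} : Finset (Finset ℕ)).erase {a, b} = {{c, d}} := by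
      rw [Finset.erase_insert (by simpa using hne)]
    simp only [this, e2]
    rw [Finset.sup_singleton, id, fmax_pair (by omega), fmax_pair (by omega),
      fmin_pair (by omega), fmin_pair (by omega)]

lemma exists_pair {β : Finset ℕ} (h : β.card = 2) : ∃ a b, a < b ∧ β = {a, b} := by
  obtain ⟨x, y, hne, rfl⟩ := Finset.card_eq_two.1 h
  rcases lt_or_gt_of_ne hne with h | h
  · exact ⟨x, y, h, rfl⟩
  · exact ⟨y, x, h, Finset.pair_comm x y⟩

lemma exists_tri {β : Finset ℕ} (h : β.card = 3) : ∃ a b c, a < b ∧ b < c ∧ β = {a, b, c} := by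
  have hl : (β.sort (· ≤ ·)).length = 3 := by rw [Finset.length_sort, h]
  have hs := Finset.sortedLT_sort β
  have ht := Finset.sort_toFinset β (· ≤ ·)
  obtain ⟨x, y, z, e⟩ := List.length_eq_three.1 hl
  rw [e] at hs ht
  have hs := hs.pairwise
  simp at hs
  exact ⟨x, y, z, hs.1.1, hs.2, by rw [← ht]; simp⟩

lemma fam_pairs {n a b c d : ℕ} (h : Good n {{a, b}, {c, d}}) (hnc : IsNoncrossing {{a, b}, {c, d}})
    (hab : a < b) (hcd : c < d) (hac : a < c) : NCc n a b c d ∧ b ≠ c := by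
  have hne := pair_ne hab hac hcd
  have h1 := h.sub {a, b} (by simp)
  have h2 := h.sub {c, d} (by simp)
  have h3 := h.disj {a, b} (by simp) {c, d} (by simp) hne
  have h4 := hnc a c b d
  simp at h1 h2 h3
  have h5 : ¬ (c < b ∧ b < d) := by
    rintro ⟨x, y⟩
    exact hne (hnc a c b d hac x y {a, b} (by simp) {c, d} (by simp) (by simp) (by simp)
      (by simp) (by simp))
  simp only [NCc]
  omega

lemma fam_surj {n : ℕ} (hn : 3 ≤ n) {F : Finset (Finset ℕ)} (h : Good n F)
    (hc : (fill n F).card = n - 3 + 1) (hnc : IsNoncrossing F) :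
    ∃ a b c d, NCc n a b c d ∧ fam a b c d = F := by
  have hs := sup_card h
  have hle : (F.sup id).card ≤ n := by
    have : F.sup id ⊆ Finset.Icc 1 n := by
      intro i hi
      simp only [Finset.mem_sup, id] at hi
      obtain ⟨γ, h1, h2⟩ := hi
      simpa using h.sub γ h1 i h2
    simpa using Finset.card_le_card this
  rw [fill_card h] at hc
  have hb : F.card * 2 ≤ ∑ β ∈ F, β.card := by
    rw [← smul_eq_mul]; exact Finset.card_nsmul_le_sum _ _ _ h.two
  have hF : F.card = 1 ∨ F.card = 2 := by
    have : F.card ≠ 0 := by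
      intro h0
      rw [Finset.card_eq_zero] at h0
      subst h0
      simp at hs hc
      omega
    omega
  rcases hF with h1 | h1
  · obtain ⟨β, rfl⟩ := Finset.card_eq_one.1 h1
    rw [Finset.sum_singleton] at hs
    obtain ⟨a, b, c, hab, hbc, rfl⟩ := exists_tri (β := β) (by omega)
    have h2 := h.sub {a, b, c} (by simp)
    simp at h2
    exact ⟨a, b, b, c, by simp only [NCc]; omega, by simp [fam]⟩
  · obtain ⟨β, γ, hne, rfl⟩ := Finset.card_eq_two.1 h1
    rw [Finset.sum_pair hne] at hs
    have t1 := h.two β (by simp)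
    have t2 := h.two γ (by simp)
    obtain ⟨a, b, hab, rfl⟩ := exists_pair (β := β) (by omega)
    obtain ⟨c, d, hcd, rfl⟩ := exists_pair (β := γ) (by omega)
    have hd := h.disj {a, b} (by simp) {c, d} (by simp) hne
    have hac : a ≠ c := by rintro rfl; simp at hd
    rcases lt_or_gt_of_ne hac with hlt | hlt
    · have := fam_pairs h hnc hab hcd hlt
      exact ⟨a, b, c, d, this.1, by rw [fam, if_neg this.2]⟩
    · have e : ({{a, b}, {c, d}} : Finset (Finset ℕ)) = {{c, d}, {a, b}} := Finset.pair_comm _ _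
      rw [e] at h hnc ⊢
      have := fam_pairs h hnc hcd hab hlt
      exact ⟨c, d, a, b, this.1, by rw [fam, if_neg this.2]⟩

def NCS (n u v : ℕ) (x : Q4) : Prop :=
  NCc n x.1 x.2.1 x.2.2.1 x.2.2.2 ∧ ncA x.1 x.2.1 x.2.2.1 x.2.2.2 = u ∧
    ncB x.1 x.2.1 x.2.2.1 x.2.2.2 = v

def mkN (n : ℕ) (hn : 3 ≤ n) (a b c d : ℕ) (h : NCc n a b c d) : NC n 3 :=
  ⟨fillP n (fam a b c d) (fam_good h), (fill_nc (fam_good h)).2 (fam_nc h), fam_sum h hn⟩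

lemma card_N (n u v : ℕ) (hn : 3 ≤ n) :
    Nat.card {x // NCS n u v x} =
      Nat.card {π : NC n 3 // skip π.val.blocks = u ∧ skew π.val.blocks = v} := by
  have A : ∀ a b c d h, skip (mkN n hn a b c d h).val.blocks = ncA a b c d := by
    intro a b c d h
    exact (fill_skip (fam_good h)).trans (fam_skip h)
  have B : ∀ a b c d h, skew (mkN n hn a b c d h).val.blocks = ncB a b c d := by
    intro a b c d h
    show skew (fill n (fam a b c d)) = _
    rw [skew, fam_quad h]
    rfl
  refine Nat.card_congr (Equiv.ofBijective
    (fun x => ⟨mkN n hn x.1.1 x.1.2.1 x.1.2.2.1 x.1.2.2.2 x.2.1, ?_⟩) ⟨?_, ?_⟩)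
  · rw [A, B]; exact x.2.2
  · rintro ⟨⟨a, b, c, d⟩, hx⟩ ⟨⟨a', b', c', d'⟩, hz⟩ e
    have e : fill n (fam a b c d) = fill n (fam a' b' c' d') :=
      congrArg (fun z => z.1.1.blocks) e
    have := congrArg blockQuad e
    rw [fam_quad hx.1, fam_quad hz.1] at this
    exact Subtype.ext this
  · rintro ⟨⟨P, hP1, hP2⟩, hP⟩
    obtain ⟨g, e⟩ := fill_of n P
    rw [← e] at hP1 hP2
    obtain ⟨a, b, c, d, h, hF⟩ := fam_surj hn g hP2 ((fill_nc g).1 hP1)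
    rw [← hF] at e
    have eP : (mkN n hn a b c d h).val = P := by
      cases P
      simp only [mkN, fillP]
      congr
    have hP' := hP
    simp only [← eP] at hP'
    rw [A, B] at hP'
    exact ⟨⟨(a, b, c, d), h, hP'⟩, Subtype.ext (Subtype.ext eP)⟩

/-- nested / triple -/
def tn (a p q b : ℕ) : Q4 := if p = q then (a, p, p, b) else (a, b, p, q)
def rhs (r k s : ℕ) : Q4 :=
  if k + 1 < s then (1, k + 2, s + 1, s + 2 + r)
  else tn 1 (s + 2) (s + 2 + (k + 1 - s)) (s + 2 + r)
def lhs (m r k s : ℕ) : Q4 :=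
  if k < r then (r + 1, m + 1 - s, 0, m - s - k)
  else (m + 2 - s, m + 2 + (k - r) - s, m + 1 - r - s, m + 1 - r - s)

def ff (m : ℕ) : Q4 → Q4 := fun (x1, x2, y2, y3) =>
  if y2 = 0 then
    if y3 = 0 then tn 1 2 (x1 + 1) (x2 + 2)
    else if x1 + y3 ≤ x2 then tn (m + 2 - x2) (m + 3 - x2) (m + 2 + x1 - x2) (m + 3 - y3)
    else rhs (x1 - 1) (x2 - 1 - y3) (1 + m - x2)
  else if y3 < x1 then
    if y2 < y3 then tn (m + 2 - x2) (m + 4 - x1) (m + 3 - y3) (m + 3 - y2)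
    else rhs (x1 - 1 - y3) (x2 - 1 - y3) (m + 2 - x1)
  else (m + 2 - x2, m + 2 - y3, m + 3 - x1, m + 3 - y2)

def gt (m a p q b : ℕ) : Q4 :=
  if a + 1 = p then
    if p = 2 then (q - 1, b - 2, 0, 0)
    else (q - p + 1, m + 3 - p, 0, m + 3 - b)
  else if a = 1 then lhs m (b - p) (q - 3) (p - 2)
  else (m + 4 - p, m + 2 - a, m + 3 - b, m + 3 - q)

def gg (m : ℕ) : Q4 → Q4 := fun (a, b, c, d) =>
  if b < c then
    if a = 1 then lhs m (d - c - 1) (b - 2) (c - 1)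
    else (m + 3 - c, m + 2 - a, m + 3 - d, m + 2 - b)
  else if b = c then gt m a b b d
  else gt m a c d b

set_option maxHeartbeats 4000000 in
lemma ff_mem (m u v : ℕ) (x : Q4) (h : PPS m u v x) :
    NCS (m + 2) u v (ff m x) ∧ gg m (ff m x) = x := by
  obtain ⟨x1, x2, y2, y3⟩ := x
  obtain ⟨h, rfl, rfl⟩ := h
  simp only [PPc] at h
  simp only [ff, rhs, tn, ppA, ppB]
  split_ifs <;> (try (exfalso; omega)) <;> simp only [NCS, NCc, ncA, ncB, gg, gt, lhs] <;>
  simp (disch := omega) only [if_pos, if_neg, if_true, Prod.mk.injEq] <;> first | omega | (simp; omega)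

set_option maxHeartbeats 4000000 in
lemma gg_mem (m u v : ℕ) (x : Q4) (h : NCS (m + 2) u v x) :
    PPS m u v (gg m x) ∧ ff m (gg m x) = x := by
  obtain ⟨a, b, c, d⟩ := x
  obtain ⟨h, rfl, rfl⟩ := h
  simp only [NCc] at h
  simp only [gg, gt, lhs, ncA, ncB]
  split_ifs <;> (try (exfalso; omega)) <;> simp only [PPS, PPc, ppA, ppB, ff, rhs, tn] <;>
  simp (disch := omega) only [if_pos, if_neg, if_true, Prod.mk.injEq] <;> first | omega | (simp; omega)

lemma card_eq (m u v : ℕ) :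
    Nat.card {x // NCS (m + 2) u v x} = Nat.card {x // PPS m u v x} :=
  Nat.card_congr
    { toFun := fun x => ⟨gg m x.1, (gg_mem m u v x.1 x.2).1⟩
      invFun := fun x => ⟨ff m x.1, (ff_mem m u v x.1 x.2).1⟩
      left_inv := fun x => Subtype.ext (gg_mem m u v x.1 x.2).2
      right_inv := fun x => Subtype.ext (ff_mem m u v x.1 x.2).2 }

/-- The pair (skip, skew) is a combinatorial interpretation of `N_{n,3}(q,t)`:
for all `n ≥ 3` and `u v`, the number of `π ∈ NC(n,3)` with `skip π = u` and
`skew π = v` equals the number of `P ∈ PP(n-2,3)` with `area P = u`, `bounce P = v`. -/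
theorem skip_skew_pair (n u v : ℕ) (hn : 3 ≤ n) :
    Nat.card {π : NC n 3 // skip π.val.blocks = u ∧ skew π.val.blocks = v} =
    Nat.card {P : Polyomino (n - 2) 3 // area P = u ∧ bounce P = v} := by
  obtain ⟨m, rfl⟩ : ∃ m, n = m + 2 := ⟨n - 2, by omega⟩
  rw [← card_N (m + 2) u v hn, card_eq, card_P, Nat.add_sub_cancel]

end QtN
end
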